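/- For every integer t ≥ 3, the identity w_3^{2^{t-2}-1}·w_4^{2^{t-2}-2} = w_3^{2^{t-2}-2}·g_{2^t-5} + Σ_{i=2}^{t-2} w_3^{2^{t-2}-2^i}·w_4^{2^{i-1}-2}·g_{2^t-3+2^i} holds in the polynomial ring F_2[w_2,w_3,w_4] (for t = 3 the sum is empty). -/

import Mathlib

open MvPolynomial

/-- The polynomials `g_r = g_r^{(4)}` in `F_2[w_2,w_3,w_4]` (variables `X 0 = w_2`,
`X 1 = w_3`, `X 2 = w_4`): `g_0 = 1`, `g_r = 0` for `r < 0`, and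
`g_r = w_2·g_{r-2} + w_3·g_{r-3} + w_4·g_{r-4}` for `r ≥ 1`. -/
noncomputable def g4 : ℤ → MvPolynomial (Fin 3) (ZMod 2)
  | r =>
    if r ≤ 0 then (if r = 0 then 1 else 0)
    else X 0 * g4 (r - 2) + X 1 * g4 (r - 3) + X 2 * g4 (r - 4)
  termination_by r => r.toNat
  decreasing_by all_goals omega

/-- The ideal `I_{n,4} = (g_{n-3}, g_{n-2}, g_{n-1}, g_n)` of `F_2[w_2,w_3,w_4]`. -/
noncomputable def I4 (n : ℤ) : Ideal (MvPolynomial (Fin 3) (ZMod 2)) :=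
  Ideal.span {g4 (n - 3), g4 (n - 2), g4 (n - 1), g4 n}

/-!
Over a ring of characteristic two, applying a recurrence `g_r = a g_{r-2} + b g_{r-3} + c g_{r-4}`
to its own right-hand side cancels the mixed terms, so that with `q = 2^k`
`g_r = a^q g_{r-2q} + b^q g_{r-3q} + c^q g_{r-4q}` for `r > 4 (q - 1)`. Hence `g_{2^t-3} = 0` and
`g_{3q-3} = w_3^{q-1}`. For `q = 2^{i-1}` and `r = 2^t - 3 + 2^i` the `w_2`-term vanishes, so each
summand of the identity splits into two consecutive members of one family. The sum telescopes from
the `g_{2^t-5}` term to the left-hand side.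
-/

section LinearRecurrence

variable {R : Type*} [CommSemiring R] [CharP R 2] {f : ℤ → R} {a b c : R} {N : ℤ}

lemma recurrence_double {d : ℤ} (hd : 0 ≤ d)
    (hf : ∀ r > N, f r = a * f (r - 2 * d) + b * f (r - 3 * d) + c * f (r - 4 * d))
    {r : ℤ} (hr : N + 4 * d < r) :
    f r = a ^ 2 * f (r - 2 * (2 * d)) + b ^ 2 * f (r - 3 * (2 * d))
      + c ^ 2 * f (r - 4 * (2 * d)) := by
  have two_eq_zero : (2 : R) = 0 := CharTwo.two_eq_zero
  calc f r = a * f (r - 2 * d) + b * f (r - 3 * d) + c * f (r - 4 * d) := hf r (by lia)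
    _ = a ^ 2 * f (r - 2 * (2 * d)) + b ^ 2 * f (r - 3 * (2 * d)) + c ^ 2 * f (r - 4 * (2 * d))
        + 2 * (a * b * f (r - 5 * d) + a * c * f (r - 6 * d) + b * c * f (r - 7 * d)) := by
      rw [hf (r - 2 * d) (by lia), hf (r - 3 * d) (by lia), hf (r - 4 * d) (by lia)]
      ring_nf
    _ = _ := by rw [two_eq_zero, zero_mul, add_zero]

lemma recurrence_two_pow
    (hf : ∀ r > N, f r = a * f (r - 2) + b * f (r - 3) + c * f (r - 4)) (k : ℕ) :
    ∀ r > N + 4 * (2 ^ k - 1), f r = a ^ 2 ^ k * f (r - 2 * 2 ^ k)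
      + b ^ 2 ^ k * f (r - 3 * 2 ^ k) + c ^ 2 ^ k * f (r - 4 * 2 ^ k) := by
  induction k with
  | zero => simpa using hf
  | succ k ih =>
    intro r hr
    have hr' : N + 4 * (2 ^ k - 1) + 4 * 2 ^ k < r := by rw [pow_succ] at hr; lia
    simpa only [pow_succ, pow_mul, mul_comm (2 : ℤ) (2 ^ k)] using
      recurrence_double (by positivity) ih hr'

end LinearRecurrence

lemma g4_of_neg {r : ℤ} (hr : r < 0) : g4 r = 0 := by
  rw [g4, if_pos hr.le, if_neg hr.ne]

lemma g4_zero : g4 0 = 1 := by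
  rw [g4, if_pos le_rfl, if_pos rfl]

lemma g4_recurrence {r : ℤ} (hr : 0 < r) :
    g4 r = X 0 * g4 (r - 2) + X 1 * g4 (r - 3) + X 2 * g4 (r - 4) := by
  rw [g4, if_neg hr.not_ge]

lemma g4_recurrence_two_pow (k : ℕ) {r : ℤ} (hr : 4 * (2 ^ k - 1) < r) :
    g4 r = X 0 ^ 2 ^ k * g4 (r - 2 * 2 ^ k) + X 1 ^ 2 ^ k * g4 (r - 3 * 2 ^ k)
      + X 2 ^ 2 ^ k * g4 (r - 4 * 2 ^ k) :=
  recurrence_two_pow (N := 0) (fun _ => g4_recurrence) k r (by rwa [zero_add])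

lemma g4_two_pow_sub_three : ∀ n : ℕ, g4 (2 ^ n - 3) = 0
  | 0 => g4_of_neg (by norm_num)
  | 1 => g4_of_neg (by norm_num)
  | n + 2 => by
    rw [g4_recurrence_two_pow n (by ring_nf; lia),
      show (2 : ℤ) ^ (n + 2) - 3 - 2 * 2 ^ n = 2 ^ (n + 1) - 3 by ring,
      show (2 : ℤ) ^ (n + 2) - 3 - 3 * 2 ^ n = 2 ^ n - 3 by ring,
      show (2 : ℤ) ^ (n + 2) - 3 - 4 * 2 ^ n = -3 by ring,
      g4_two_pow_sub_three (n + 1), g4_two_pow_sub_three n, g4_of_neg (by norm_num)]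
    simp only [mul_zero, add_zero]

lemma g4_three_mul_two_pow_sub_three (n : ℕ) : g4 (3 * 2 ^ n - 3) = X 1 ^ (2 ^ n - 1) := by
  induction n with
  | zero => simp [g4_zero]
  | succ n ih =>
    have two_pow_pos : (0 : ℤ) < 2 ^ n := by positivity
    have exponent_eq : 2 ^ n + (2 ^ n - 1) = 2 ^ (n + 1) - 1 := by
      have := Nat.one_le_two_pow (n := n)
      rw [pow_succ]
      lia
    rw [g4_recurrence_two_pow n (by rw [pow_succ]; lia),
      show (3 : ℤ) * 2 ^ (n + 1) - 3 - 2 * 2 ^ n = 2 ^ (n + 2) - 3 by ring,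
      show (3 : ℤ) * 2 ^ (n + 1) - 3 - 3 * 2 ^ n = 3 * 2 ^ n - 3 by ring,
      show (3 : ℤ) * 2 ^ (n + 1) - 3 - 4 * 2 ^ n = 2 ^ (n + 1) - 3 by ring,
      g4_two_pow_sub_three, g4_two_pow_sub_three, ih, mul_zero, mul_zero, zero_add, add_zero,
      ← pow_add, exponent_eq]

lemma g4_two_pow_sub_three_add_two_pow {m j : ℕ} (hj : j < m) :
    g4 (2 ^ m - 3 + 2 ^ (j + 1)) =
      X 1 ^ 2 ^ j * g4 (2 ^ m - 3 - 2 ^ j) + X 2 ^ 2 ^ j * g4 (2 ^ m - 3 - 2 ^ (j + 1)) := by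
  have two_pow_succ_le : (2 : ℤ) ^ (j + 1) ≤ 2 ^ m := pow_le_pow_right₀ one_le_two hj
  rw [g4_recurrence_two_pow j (by rw [pow_succ] at *; lia),
    show (2 : ℤ) ^ m - 3 + 2 ^ (j + 1) - 2 * 2 ^ j = 2 ^ m - 3 by ring,
    show (2 : ℤ) ^ m - 3 + 2 ^ (j + 1) - 3 * 2 ^ j = 2 ^ m - 3 - 2 ^ j by ring,
    show (2 : ℤ) ^ m - 3 + 2 ^ (j + 1) - 4 * 2 ^ j = 2 ^ m - 3 - 2 ^ (j + 1) by ring,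
    g4_two_pow_sub_three, mul_zero, zero_add]

/-- With `n = t - 2`, the polynomial `w_3^{2^n - 2^j} w_4^{2^j - 2} g_{2^t - 3 - 2^j}`: the `i`-th
summand of the identity is the sum of these for `j = i - 1` and `j = i`, so the identity
telescopes. The exponents use truncated subtraction and are meaningful for `1 ≤ j ≤ n`. -/
noncomputable def telescopeTerm (n j : ℕ) : MvPolynomial (Fin 3) (ZMod 2) :=
  X 1 ^ (2 ^ n - 2 ^ j) * X 2 ^ (2 ^ j - 2) * g4 (2 ^ (n + 2) - 3 - 2 ^ j)

lemma telescopeTerm_one (n : ℕ) :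
    telescopeTerm n 1 = X 1 ^ (2 ^ n - 2) * g4 (2 ^ (n + 2) - 5) := by
  rw [telescopeTerm, pow_one, pow_one, Nat.sub_self, pow_zero, mul_one, sub_sub]
  norm_num

lemma telescopeTerm_self (n : ℕ) :
    telescopeTerm n n = X 1 ^ (2 ^ n - 1) * X 2 ^ (2 ^ n - 2) := by
  rw [telescopeTerm, Nat.sub_self, pow_zero, one_mul,
    show (2 : ℤ) ^ (n + 2) - 3 - 2 ^ n = 3 * 2 ^ n - 3 by ring,
    g4_three_mul_two_pow_sub_three, mul_comm]

lemma telescopeTerm_add_telescopeTerm_succ {n j : ℕ} (hj : 1 ≤ j) (hjn : j < n) :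
    telescopeTerm n j + telescopeTerm n (j + 1) =
      X 1 ^ (2 ^ n - 2 ^ (j + 1)) * X 2 ^ (2 ^ j - 2) * g4 (2 ^ (n + 2) - 3 + 2 ^ (j + 1)) := by
  have two_pow_succ_le : 2 ^ (j + 1) ≤ 2 ^ n := Nat.pow_le_pow_right two_pos hjn
  have two_le_two_pow : 2 ≤ 2 ^ j := Nat.le_self_pow (by lia) 2
  have exponent_w3 : 2 ^ n - 2 ^ j = (2 ^ n - 2 ^ (j + 1)) + 2 ^ j := by
    rw [pow_succ] at *
    lia
  have exponent_w4 : 2 ^ (j + 1) - 2 = (2 ^ j - 2) + 2 ^ j := by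
    rw [pow_succ]
    lia
  rw [telescopeTerm, telescopeTerm, g4_two_pow_sub_three_add_two_pow (by lia), exponent_w3,
    exponent_w4, pow_add, pow_add]
  ring

lemma telescopeTerm_one_add_sum {n m : ℕ} (hm : 1 ≤ m) (hmn : m ≤ n) :
    telescopeTerm n 1 + ∑ i ∈ Finset.Icc 2 m, X 1 ^ (2 ^ n - 2 ^ i) * X 2 ^ (2 ^ (i - 1) - 2)
      * g4 (2 ^ (n + 2) - 3 + 2 ^ i) = telescopeTerm n m := by
  induction m, hm using Nat.le_induction with
  | base => simp
  | succ m hm ih =>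
    rw [Finset.sum_Icc_succ_top (by lia), ← add_assoc, ih (by lia), Nat.add_sub_cancel,
      ← telescopeTerm_add_telescopeTerm_succ hm hmn, CharTwo.add_cancel_left]

/-- Equation (3.7): for every `t ≥ 3`,
`w_3^{2^{t-2}-1} w_4^{2^{t-2}-2} = w_3^{2^{t-2}-2} g_{2^t-5}
  + Σ_{i=2}^{t-2} w_3^{2^{t-2}-2^i} w_4^{2^{i-1}-2} g_{2^t-3+2^i}`
in `F_2[w_2,w_3,w_4]` (for `t = 3` the sum is empty). -/
theorem stmt14 (t : ℕ) (ht : 3 ≤ t) :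
    (X 1 : MvPolynomial (Fin 3) (ZMod 2)) ^ (2 ^ (t - 2) - 1) * X 2 ^ (2 ^ (t - 2) - 2) =
      X 1 ^ (2 ^ (t - 2) - 2) * g4 (2 ^ t - 5)
        + ∑ i ∈ Finset.Icc 2 (t - 2),
            X 1 ^ (2 ^ (t - 2) - 2 ^ i) * X 2 ^ (2 ^ (i - 1) - 2)
              * g4 (2 ^ t - 3 + 2 ^ i) := by
  obtain ⟨n, rfl⟩ : ∃ n, t = n + 2 := ⟨t - 2, by lia⟩
  rw [Nat.add_sub_cancel, ← telescopeTerm_self, ← telescopeTerm_one]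
  exact (telescopeTerm_one_add_sum (by lia) le_rfl).symm
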